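/- arXiv:1502.04318 — 3 statements merged into one kernel-verified Lean document; each statement's English description precedes it below -/
import Mathlib

section
/- Under the uniform two-step contraction condition, for every bounded measurable F : E → ℝ and every x₀ ∈ E, writing u = Σ_{n=0}^∞ K^n F for the Neumann-series solution of u = Ku + F, the second moment of the score-sum estimator S = Σ_{n=0}^∞ F(X_n) is given exactly by 𝔼_{x₀}[S²] = Σ_{j=0}^∞ K^j(2 F·u − F²)(x₀), where F·u and F² denote pointwise products; in particular the series on the right-hand side converges absolutely. -/
open MeasureTheory ProbabilityTheory

/-- The measurable-space structure on `E ∪ {∂}`, realized as `Option E` with `∂ = none`. -/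
instance {α : Type*} [MeasurableSpace α] : MeasurableSpace (Option α) :=
  MeasurableSpace.comap (fun o => ((Equiv.optionEquivSumPUnit α) o : α ⊕ PUnit.{1})) inferInstance

/-- The integral operator `(K F)(x) = ∫ F(y) κ(x, dy)` associated to a kernel `κ`. -/
noncomputable def Kop {E : Type*} [MeasurableSpace E] (κ : Kernel E E) (F : E → ℝ) : E → ℝ :=
  fun x => ∫ y, F y ∂(κ x)

/-- The `n`-th iterate `K^n` of the integral operator. -/
noncomputable def Kiter {E : Type*} [MeasurableSpace E] (κ : Kernel E E) : ℕ → (E → ℝ) → E → ℝ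
  | 0 => id
  | n + 1 => fun F => Kop κ (Kiter κ n F)

/-! Write `T_n = Σ_{k ≥ n} F(X_k)` for the tails of `S = T_0`. Since `T_n = F(X_n) + T_{n+1}`, the
square telescopes: `S² = Σ_n (T_n² - T_{n+1}²) = Σ_n F(X_n) (2 T_n - F(X_n))`. By the Markov
property `T_n` may be replaced under the expectation by `u(X_n)`, so the `n`-th term has expectation
`𝔼[(2 F u - F²)(X_n)] = K^n(2 F u - F²)(x₀)`. Every interchange of sum and expectation is dominated
by means of a uniform bound on the potential `Σ_n K^n |F|`. Killing adds nothing to the argument: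
extension by zero at the cemetery intertwines `K` with the operator of `κ̂`, so the identity for
Markov chains on `E ∪ {∂}` restricts to `E`. -/

open Filter
open scoped NNReal ENNReal Topology

section Series

theorem hasSum_mul_two_mul_tail_sub {R : Type*} [NormedCommRing R] [CompleteSpace R] {a : ℕ → R}
    (ha : Summable fun n => ‖a n‖) :
    HasSum (fun n => a n * (2 * ∑' k, a (n + k) - a n)) ((∑' n, a n) ^ 2) := by
  let T : ℕ → R := fun n => ∑' k, a (n + k)
  have tail_eq (n : ℕ) : T n = a n + T (n + 1) := by
    have hs : Summable fun k => a (n + k) := ha.of_norm.comp_injective (add_right_injective n)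
    simpa only [T, add_zero, add_assoc, add_comm 1] using hs.tsum_eq_zero_add
  have tail_tendsto : Tendsto T atTop (𝓝 0) := by
    simpa only [T, add_comm] using tendsto_sum_nat_add a
  have summable_terms : Summable fun n => a n * (2 * T n - a n) := by
    have hbdd : Tendsto (fun n => 2 * T n - a n) atTop (𝓝 0) := by
      simpa using (tail_tendsto.const_mul 2).sub ha.of_norm.tendsto_atTop_zero
    obtain ⟨C, hC⟩ := hbdd.norm.bddAbove_range
    refine .of_norm_bounded (ha.mul_right C) fun n => (norm_mul_le _ _).trans ?_
    exact mul_le_mul_of_nonneg_left (hC ⟨n, rfl⟩) (norm_nonneg _)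
  have telescope (n : ℕ) : a n * (2 * T n - a n) = T n ^ 2 - T (n + 1) ^ 2 := by
    rw [tail_eq n]; ring
  have partial_sums : Tendsto (fun N => ∑ n ∈ Finset.range N, a n * (2 * T n - a n)) atTop
      (𝓝 (T 0 ^ 2)) := by
    simp only [telescope, Finset.sum_range_sub' fun n => T n ^ 2]
    simpa using (tail_tendsto.pow 2).const_sub (T 0 ^ 2)
  have sum_eq := tendsto_nhds_unique summable_terms.hasSum.tendsto_sum_nat partial_sums
  simpa only [sum_eq, T, zero_add] using summable_terms.hasSum

theorem hasSum_pow_div_two {𝕜 : Type*} [NormedDivisionRing 𝕜] {c : 𝕜} (hc : ‖c‖ < 1) :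
    HasSum (fun n : ℕ => c ^ (n / 2)) ((1 - c)⁻¹ + (1 - c)⁻¹) := by
  have hgeom := hasSum_geometric_of_norm_lt_one hc
  refine HasSum.even_add_odd ?_ ?_
  · simpa using hgeom
  · simpa [Nat.mul_add_div] using hgeom

end Series

section SeriesOfIntegrals

variable {α ι G : Type*} [MeasurableSpace α] [NormedAddCommGroup G]
  {μ : Measure α} {f : ι → α → G}

theorem tsum_lintegral_enorm_ne_top_of_summable_integral_norm (hf : ∀ i, Integrable (f i) μ)
    (hsum : Summable fun i => ∫ x, ‖f i x‖ ∂μ) : ∑' i, ∫⁻ x, ‖f i x‖ₑ ∂μ ≠ ∞ := by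
  simp only [← ofReal_integral_norm_eq_lintegral_enorm (hf _)]
  exact hsum.tsum_ofReal_ne_top

variable [Countable ι]

theorem ae_summable_norm_of_summable_integral_norm (hf : ∀ i, Integrable (f i) μ)
    (hsum : Summable fun i => ∫ x, ‖f i x‖ ∂μ) : ∀ᵐ x ∂μ, Summable fun i => ‖f i x‖ := by
  refine summable_norm_of_tsum_eLpNorm_ne_top le_rfl (fun i => (hf i).1) ?_
  simpa only [eLpNorm_one_eq_lintegral_enorm] using
    tsum_lintegral_enorm_ne_top_of_summable_integral_norm hf hsum

theorem integrable_tsum_of_summable_integral_norm {f : ι → α → ℝ} (hf : ∀ i, Integrable (f i) μ)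
    (hsum : Summable fun i => ∫ x, ‖f i x‖ ∂μ) : Integrable (fun x => ∑' i, f i x) μ := by
  refine ⟨(AEMeasurable.tsum fun i => (hf i).aemeasurable).aestronglyMeasurable, ?_⟩
  calc ∫⁻ x, ‖∑' i, f i x‖ₑ ∂μ
      ≤ ∫⁻ x, ∑' i, ‖f i x‖ₑ ∂μ := lintegral_mono fun x => enorm_tsum_le_tsum_enorm
    _ = ∑' i, ∫⁻ x, ‖f i x‖ₑ ∂μ := lintegral_tsum fun i => (hf i).1.enorm
    _ < ∞ := (tsum_lintegral_enorm_ne_top_of_summable_integral_norm hf hsum).lt_top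

theorem integral_norm_tsum_le_tsum_integral_norm {f : ι → α → ℝ} (hf : ∀ i, Integrable (f i) μ)
    (hsum : Summable fun i => ∫ x, ‖f i x‖ ∂μ) :
    ∫ x, ‖∑' i, f i x‖ ∂μ ≤ ∑' i, ∫ x, ‖f i x‖ ∂μ := by
  have hsum' : Summable fun i => ∫ x, ‖‖f i x‖‖ ∂μ := by simpa only [norm_norm] using hsum
  rw [integral_tsum_of_summable_integral_norm (fun i => (hf i).norm) hsum']
  refine integral_mono_ae (integrable_tsum_of_summable_integral_norm hf hsum).norm
    (integrable_tsum_of_summable_integral_norm (fun i => (hf i).norm) hsum') ?_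
  filter_upwards [ae_summable_norm_of_summable_integral_norm hf hsum] with x hx
  exact norm_tsum_le_tsum_norm hx

end SeriesOfIntegrals

/-- The bounded measurable real functions on a measurable space, as a predicate. They are the
functions on which `Kop` acts for a finite kernel, and the test functions of the Markov property. -/
structure IsBoundedMeasurable {S : Type*} [MeasurableSpace S] (g : S → ℝ) : Prop where
  measurable : Measurable g
  bounded : ∃ C, ∀ x, |g x| ≤ C

namespace IsBoundedMeasurable

variable {S : Type*} [MeasurableSpace S] {g h : S → ℝ}

theorem const (c : ℝ) : IsBoundedMeasurable fun _ : S => c :=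
  ⟨measurable_const, |c|, fun _ => le_rfl⟩

theorem abs (hg : IsBoundedMeasurable g) : IsBoundedMeasurable |g| := by
  obtain ⟨C, hC⟩ := hg.bounded
  exact ⟨hg.measurable.abs, C, fun x => by simpa using hC x⟩

theorem sub (hg : IsBoundedMeasurable g) (hh : IsBoundedMeasurable h) :
    IsBoundedMeasurable fun x => g x - h x := by
  obtain ⟨C, hC⟩ := hg.bounded
  obtain ⟨D, hD⟩ := hh.bounded
  exact ⟨hg.measurable.sub hh.measurable, C + D,
    fun x => (abs_sub _ _).trans (add_le_add (hC x) (hD x))⟩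

theorem mul (hg : IsBoundedMeasurable g) (hh : IsBoundedMeasurable h) :
    IsBoundedMeasurable fun x => g x * h x := by
  obtain ⟨C, hC⟩ := hg.bounded
  obtain ⟨D, hD⟩ := hh.bounded
  refine ⟨hg.measurable.mul hh.measurable, C * D, fun x => ?_⟩
  rw [abs_mul]
  exact mul_le_mul (hC x) (hD x) (abs_nonneg _) ((abs_nonneg _).trans (hC x))

theorem comp_measurable {Ω : Type*} [MeasurableSpace Ω] (hg : IsBoundedMeasurable g)
    {Y : Ω → S} (hY : Measurable Y) : IsBoundedMeasurable fun ω => g (Y ω) := by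
  obtain ⟨C, hC⟩ := hg.bounded
  exact ⟨hg.measurable.comp hY, C, fun ω => hC (Y ω)⟩

theorem integrable {μ : Measure S} [IsFiniteMeasure μ] (hg : IsBoundedMeasurable g) :
    Integrable g μ := by
  obtain ⟨C, hC⟩ := hg.bounded
  exact .of_bound hg.measurable.aestronglyMeasurable C (.of_forall hC)

theorem integrable_comp {Ω : Type*} [MeasurableSpace Ω] {P : Measure Ω} [IsFiniteMeasure P]
    (hg : IsBoundedMeasurable g) {Y : Ω → S} (hY : Measurable Y) :
    Integrable (fun ω => g (Y ω)) P :=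
  (hg.comp_measurable hY).integrable

end IsBoundedMeasurable

section KernelOperator

variable {S : Type*} [MeasurableSpace S] {κ : Kernel S S} {f g : S → ℝ} {M : ℝ}

theorem kiter_succ_eq_kiter_kop (κ : Kernel S S) (n : ℕ) (g : S → ℝ) :
    Kiter κ (n + 1) g = Kiter κ n (Kop κ g) := by
  induction n with
  | zero => rfl
  | succ n ih => exact congrArg (Kop κ) ih

theorem kiter_nonneg (hf : 0 ≤ f) (n : ℕ) : 0 ≤ Kiter κ n f := by
  induction n with
  | zero => exact hf
  | succ n ih => exact fun x => integral_nonneg ih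

theorem abs_kop_le_mul_measureReal [IsFiniteKernel κ] (hg : ∀ x, |g x| ≤ M) (x : S) :
    |Kop κ g x| ≤ M * (κ x).real Set.univ := by
  simp only [← Real.norm_eq_abs] at hg ⊢
  exact norm_integral_le_of_norm_le_const (.of_forall hg)

theorem abs_kop_le_of_subMarkov (hsub : ∀ x, κ x Set.univ ≤ 1) (hg : ∀ x, |g x| ≤ M) (x : S) :
    |Kop κ g x| ≤ M := by
  have : IsFiniteKernel κ := ⟨⟨1, ENNReal.one_lt_top, hsub⟩⟩
  have hM : 0 ≤ M := (abs_nonneg _).trans (hg x)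
  refine (abs_kop_le_mul_measureReal hg x).trans (mul_le_of_le_one_right hM ?_)
  exact ENNReal.toReal_mono ENNReal.one_ne_top (hsub x)

theorem abs_kop_kop_le [IsFiniteKernel κ] {c : ℝ≥0}
    (hc : ∀ x, ∫⁻ y, κ y Set.univ ∂(κ x) ≤ c) (hg : ∀ x, |g x| ≤ M) (x : S) :
    |Kop κ (Kop κ g) x| ≤ M * c := by
  have hM : 0 ≤ M := (abs_nonneg _).trans (hg x)
  have hmass : AEMeasurable (fun y => κ y Set.univ) (κ x) :=
    (κ.measurable_coe MeasurableSet.univ).aemeasurable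
  have hint : Integrable (fun y => (κ y).real Set.univ) (κ x) :=
    integrable_toReal_of_lintegral_ne_top hmass ((hc x).trans_lt ENNReal.coe_lt_top).ne
  calc |Kop κ (Kop κ g) x|
      ≤ ∫ y, |Kop κ g y| ∂(κ x) := abs_integral_le_integral_abs
    _ ≤ ∫ y, M * (κ y).real Set.univ ∂(κ x) :=
        integral_mono_of_nonneg (.of_forall fun _ => abs_nonneg _) (hint.const_mul M)
          (.of_forall (abs_kop_le_mul_measureReal hg))
    _ = M * (∫⁻ y, κ y Set.univ ∂(κ x)).toReal := by
        rw [integral_const_mul]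
        exact congrArg (M * ·) (integral_toReal hmass (.of_forall fun y => measure_lt_top _ _))
    _ ≤ M * c := by gcongr; exact ENNReal.toReal_mono ENNReal.coe_ne_top (hc x)

theorem abs_kiter_le_of_twoStep (hsub : ∀ x, κ x Set.univ ≤ 1) {c : ℝ≥0}
    (hc : ∀ x, ∫⁻ y, κ y Set.univ ∂(κ x) ≤ c) (hg : ∀ x, |g x| ≤ M) (n : ℕ) (x : S) :
    |Kiter κ n g x| ≤ M * (c : ℝ) ^ (n / 2) := by
  have : IsFiniteKernel κ := ⟨⟨1, ENNReal.one_lt_top, hsub⟩⟩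
  induction n using Nat.twoStepInduction generalizing x with
  | zero => simpa [Kiter] using hg x
  | one => simpa [Kiter] using abs_kop_le_of_subMarkov hsub hg x
  | more n ih _ =>
    rw [show (n + 2) / 2 = n / 2 + 1 by lia, pow_succ, ← mul_assoc]
    exact abs_kop_kop_le hc ih x

variable [IsFiniteKernel κ]

theorem IsBoundedMeasurable.kop (hg : IsBoundedMeasurable g) : IsBoundedMeasurable (Kop κ g) := by
  obtain ⟨C, hC⟩ := hg.bounded
  refine ⟨hg.measurable.stronglyMeasurable.integral_kernel.measurable,
    C * κ.bound.toReal, fun x => (abs_kop_le_mul_measureReal hC x).trans ?_⟩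
  have hC0 : 0 ≤ C := (abs_nonneg _).trans (hC x)
  gcongr
  exact ENNReal.toReal_mono κ.bound_ne_top (κ.measure_le_bound x _)

theorem IsBoundedMeasurable.kiter (hg : IsBoundedMeasurable g) (n : ℕ) :
    IsBoundedMeasurable (Kiter κ n g) := by
  induction n with
  | zero => exact hg
  | succ n ih => exact ih.kop

theorem abs_kiter_le_kiter_abs (hg : IsBoundedMeasurable g) (n : ℕ) (x : S) :
    |Kiter κ n g x| ≤ Kiter κ n |g| x := by
  induction n generalizing x with
  | zero => exact le_rfl
  | succ n ih =>
    calc |Kop κ (Kiter κ n g) x|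
        ≤ ∫ y, |Kiter κ n g y| ∂(κ x) := abs_integral_le_integral_abs
      _ ≤ Kop κ (Kiter κ n |g|) x :=
          integral_mono_of_nonneg (.of_forall fun _ => abs_nonneg _)
            (hg.abs.kiter n).integrable (.of_forall ih)

end KernelOperator

/-- `F` is measurable and the potential `Σ_n K^n |F|` converges everywhere with sum at most `R`.
The bound is imposed on the partial sums, because `tsum` is `0` on divergent series. -/
structure HasBoundedPotential {S : Type*} [MeasurableSpace S] (κ : Kernel S S) (F : S → ℝ)
    (R : ℝ) : Prop where
  measurable : Measurable F
  sum_le : ∀ N x, ∑ n ∈ Finset.range N, Kiter κ n |F| x ≤ R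

theorem hasBoundedPotential_of_twoStep {S : Type*} [MeasurableSpace S] {κ : Kernel S S}
    {F : S → ℝ} {M : ℝ} (hsub : ∀ x, κ x Set.univ ≤ 1) {c : ℝ≥0} (hc1 : c < 1)
    (hc : ∀ x, ∫⁻ y, κ y Set.univ ∂(κ x) ≤ c) (hF : Measurable F) (hM : ∀ x, |F x| ≤ M) :
    HasBoundedPotential κ F (M * ((1 - (c : ℝ))⁻¹ + (1 - (c : ℝ))⁻¹)) := by
  refine ⟨hF, fun N x => ?_⟩
  have hM0 : 0 ≤ M := (abs_nonneg _).trans (hM x)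
  have hgeom : HasSum (fun n : ℕ => (c : ℝ) ^ (n / 2)) _ :=
    hasSum_pow_div_two (by simpa using hc1)
  have hterm (n : ℕ) : Kiter κ n |F| x ≤ M * (c : ℝ) ^ (n / 2) :=
    (le_abs_self _).trans (abs_kiter_le_of_twoStep hsub hc (by simpa using hM) n x)
  exact (Finset.sum_le_sum fun n _ => hterm n).trans
    (sum_le_hasSum _ (fun n _ => by positivity) (hgeom.mul_left M))

namespace HasBoundedPotential

variable {S : Type*} [MeasurableSpace S] {κ : Kernel S S} {F : S → ℝ} {R : ℝ}

theorem nonneg (h : HasBoundedPotential κ F R) (x : S) : 0 ≤ R := by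
  simpa using h.sum_le 0 x

theorem abs_le (h : HasBoundedPotential κ F R) (x : S) : |F x| ≤ R := by
  simpa [Kiter] using h.sum_le 1 x

theorem isBoundedMeasurable (h : HasBoundedPotential κ F R) : IsBoundedMeasurable F :=
  ⟨h.measurable, R, h.abs_le⟩

theorem summable_kiter_abs (h : HasBoundedPotential κ F R) (x : S) :
    Summable fun n => Kiter κ n |F| x :=
  summable_of_sum_range_le (fun n => kiter_nonneg (abs_nonneg F) n x) (h.sum_le · x)

variable [IsFiniteKernel κ]

theorem isBoundedMeasurable_tsum_kiter (h : HasBoundedPotential κ F R) :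
    IsBoundedMeasurable fun x => ∑' n, Kiter κ n F x := by
  refine ⟨Measurable.tsum fun n => (h.isBoundedMeasurable.kiter n).measurable, R, fun x => ?_⟩
  have habs (n : ℕ) : ‖Kiter κ n F x‖ ≤ Kiter κ n |F| x :=
    abs_kiter_le_kiter_abs h.isBoundedMeasurable n x
  calc ‖∑' n, Kiter κ n F x‖
      ≤ ∑' n, Kiter κ n |F| x := tsum_of_norm_bounded (h.summable_kiter_abs x).hasSum habs
    _ ≤ R := (h.summable_kiter_abs x).tsum_le_of_sum_range_le (h.sum_le · x)

end HasBoundedPotential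

/-- `X` is a time-homogeneous Markov chain with transition kernel `κ` under `P`, started from an
arbitrary initial law. The Markov property `P(X_{n+1} ∈ · | X_0, …, X_n) = κ(X_n, ·)` is tested
against bounded measurable functions of the past and of the next state. -/
structure IsMarkovChain {S Ω : Type*} [MeasurableSpace S] [MeasurableSpace Ω] (κ : Kernel S S)
    (P : Measure Ω) (X : ℕ → Ω → S) : Prop where
  measurable : ∀ n, Measurable (X n)
  markov : ∀ (n : ℕ) (f : (Fin (n + 1) → S) → ℝ) (g : S → ℝ),
    IsBoundedMeasurable f → IsBoundedMeasurable g →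
    ∫ ω, f (fun i => X i ω) * g (X (n + 1) ω) ∂P
      = ∫ ω, f (fun i => X i ω) * Kop κ g (X n ω) ∂P

namespace IsMarkovChain

variable {S Ω : Type*} [MeasurableSpace S] [MeasurableSpace Ω] {κ : Kernel S S}
  {P : Measure Ω} {X : ℕ → Ω → S} {g h F : S → ℝ} {R : ℝ}

theorem integrable_mul_comp_add [IsFiniteMeasure P] (hX : IsMarkovChain κ P X)
    (hg : IsBoundedMeasurable g) (hh : IsBoundedMeasurable h) (n k : ℕ) :
    Integrable (fun ω => g (X n ω) * h (X (n + k) ω)) P :=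
  ((hg.comp_measurable (hX.measurable n)).mul
    (hh.comp_measurable (hX.measurable (n + k)))).integrable

variable [IsFiniteKernel κ]

theorem integral_mul_comp_add (hX : IsMarkovChain κ P X) (hh : IsBoundedMeasurable h)
    (hg : IsBoundedMeasurable g) (n k : ℕ) :
    ∫ ω, h (X n ω) * g (X (n + k) ω) ∂P = ∫ ω, h (X n ω) * Kiter κ k g (X n ω) ∂P := by
  induction k generalizing g with
  | zero => rfl
  | succ k ih =>
    have past : IsBoundedMeasurable fun v : Fin (n + k + 1) → S => h (v ⟨n, by lia⟩) :=
      hh.comp_measurable (measurable_pi_apply _)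
    rw [kiter_succ_eq_kiter_kop, ← ih hg.kop]
    exact hX.markov (n + k) _ g past hg

theorem integral_comp (hX : IsMarkovChain κ P X) (hg : IsBoundedMeasurable g) (n : ℕ) :
    ∫ ω, g (X n ω) ∂P = ∫ ω, Kiter κ n g (X 0 ω) ∂P := by
  simpa using hX.integral_mul_comp_add (.const 1) hg 0 n

variable [IsFiniteMeasure P]

theorem sum_integral_abs_mul_comp_add_le (hX : IsMarkovChain κ P X) (hg : IsBoundedMeasurable g)
    (hF : HasBoundedPotential κ F R) (n N : ℕ) :
    ∑ k ∈ Finset.range N, ∫ ω, |g (X n ω) * F (X (n + k) ω)| ∂P ≤ R * ∫ ω, |g (X n ω)| ∂P := by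
  have hFb := hF.isBoundedMeasurable
  have markov (k : ℕ) : ∫ ω, |g (X n ω) * F (X (n + k) ω)| ∂P
      = ∫ ω, |g (X n ω)| * Kiter κ k |F| (X n ω) ∂P := by
    simp only [abs_mul]
    exact hX.integral_mul_comp_add hg.abs hFb.abs n k
  have hint (k : ℕ) : Integrable (fun ω => |g (X n ω)| * Kiter κ k |F| (X n ω)) P :=
    (hg.abs.mul (hFb.abs.kiter k)).integrable_comp (hX.measurable n)
  simp only [markov]
  rw [← integral_finsetSum _ fun k _ => hint k, ← integral_const_mul]
  refine integral_mono_of_nonneg (.of_forall fun ω => ?_)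
    ((hg.abs.integrable_comp (hX.measurable n)).const_mul R) (.of_forall fun ω => ?_)
  · exact Finset.sum_nonneg fun k _ =>
      mul_nonneg (abs_nonneg _) (kiter_nonneg (abs_nonneg F) k _)
  · simp only [← Finset.mul_sum, mul_comm R]
    exact mul_le_mul_of_nonneg_left (hF.sum_le N _) (abs_nonneg _)

theorem summable_integral_abs_mul_comp_add (hX : IsMarkovChain κ P X)
    (hg : IsBoundedMeasurable g) (hF : HasBoundedPotential κ F R) (n : ℕ) :
    Summable fun k => ∫ ω, |g (X n ω) * F (X (n + k) ω)| ∂P :=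
  summable_of_sum_range_le (fun _ => integral_nonneg fun _ => abs_nonneg _)
    (hX.sum_integral_abs_mul_comp_add_le hg hF n)

theorem summable_integral_abs_comp (hX : IsMarkovChain κ P X) (hF : HasBoundedPotential κ F R) :
    Summable fun n => ∫ ω, |F (X n ω)| ∂P := by
  simpa using hX.summable_integral_abs_mul_comp_add (.const 1) hF 0

theorem ae_summable_abs_comp (hX : IsMarkovChain κ P X) (hF : HasBoundedPotential κ F R) :
    ∀ᵐ ω ∂P, Summable fun n => |F (X n ω)| := by
  have hint (n : ℕ) : Integrable (fun ω => F (X n ω)) P :=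
    hF.isBoundedMeasurable.integrable_comp (hX.measurable n)
  simpa only [Real.norm_eq_abs] using
    ae_summable_norm_of_summable_integral_norm hint (hX.summable_integral_abs_comp hF)

theorem integrable_mul_tsum_comp_add (hX : IsMarkovChain κ P X) (hg : IsBoundedMeasurable g)
    (hF : HasBoundedPotential κ F R) (n : ℕ) :
    Integrable (fun ω => g (X n ω) * ∑' k, F (X (n + k) ω)) P := by
  simpa only [tsum_mul_left] using integrable_tsum_of_summable_integral_norm
    (hX.integrable_mul_comp_add hg hF.isBoundedMeasurable n)
    (hX.summable_integral_abs_mul_comp_add hg hF n)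

theorem integral_abs_mul_tsum_comp_add_le (hX : IsMarkovChain κ P X)
    (hg : IsBoundedMeasurable g) (hF : HasBoundedPotential κ F R) (n : ℕ) :
    ∫ ω, |g (X n ω) * ∑' k, F (X (n + k) ω)| ∂P ≤ R * ∫ ω, |g (X n ω)| ∂P := by
  have hsum := hX.summable_integral_abs_mul_comp_add hg hF n
  calc ∫ ω, |g (X n ω) * ∑' k, F (X (n + k) ω)| ∂P
      ≤ ∑' k, ∫ ω, |g (X n ω) * F (X (n + k) ω)| ∂P := by
        simpa only [tsum_mul_left, Real.norm_eq_abs] using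
          integral_norm_tsum_le_tsum_integral_norm
            (hX.integrable_mul_comp_add hg hF.isBoundedMeasurable n) hsum
    _ ≤ R * ∫ ω, |g (X n ω)| ∂P :=
        hsum.tsum_le_of_sum_range_le (hX.sum_integral_abs_mul_comp_add_le hg hF n)

theorem integral_mul_tsum_comp_add (hX : IsMarkovChain κ P X) (hg : IsBoundedMeasurable g)
    (hF : HasBoundedPotential κ F R) (n : ℕ) :
    ∫ ω, g (X n ω) * ∑' k, F (X (n + k) ω) ∂P
      = ∫ ω, g (X n ω) * ∑' k, Kiter κ k F (X n ω) ∂P := by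
  have hFb := hF.isBoundedMeasurable
  have hint (k : ℕ) : Integrable (fun ω => g (X n ω) * Kiter κ k F (X n ω)) P :=
    (hg.mul (hFb.kiter k)).integrable_comp (hX.measurable n)
  have hsum : Summable fun k => ∫ ω, ‖g (X n ω) * Kiter κ k F (X n ω)‖ ∂P := by
    refine .of_nonneg_of_le (fun _ => integral_nonneg fun _ => norm_nonneg _) (fun k => ?_)
      (hX.summable_integral_abs_mul_comp_add hg hF n)
    simp only [abs_mul, norm_mul, Real.norm_eq_abs]
    calc ∫ ω, |g (X n ω)| * |Kiter κ k F (X n ω)| ∂P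
        ≤ ∫ ω, |g (X n ω)| * Kiter κ k |F| (X n ω) ∂P :=
          integral_mono_of_nonneg (.of_forall fun _ => mul_nonneg (abs_nonneg _) (abs_nonneg _))
            ((hg.abs.mul (hFb.abs.kiter k)).integrable_comp (hX.measurable n))
            (.of_forall fun _ =>
              mul_le_mul_of_nonneg_left (abs_kiter_le_kiter_abs hFb k _) (abs_nonneg _))
      _ = ∫ ω, |g (X n ω)| * |F (X (n + k) ω)| ∂P :=
          (hX.integral_mul_comp_add hg.abs hFb.abs n k).symm
  simp only [← tsum_mul_left]
  rw [← integral_tsum_of_summable_integral_norm hint hsum,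
    ← integral_tsum_of_summable_integral_norm (hX.integrable_mul_comp_add hg hFb n)
      (hX.summable_integral_abs_mul_comp_add hg hF n)]
  exact tsum_congr fun k => hX.integral_mul_comp_add hg hFb n k

theorem integrable_mul_two_mul_tail_sub (hX : IsMarkovChain κ P X)
    (hF : HasBoundedPotential κ F R) (n : ℕ) :
    Integrable (fun ω => F (X n ω) * (2 * ∑' k, F (X (n + k) ω) - F (X n ω))) P := by
  have hFb := hF.isBoundedMeasurable
  refine (((hX.integrable_mul_tsum_comp_add hFb hF n).const_mul 2).sub
    ((hFb.mul hFb).integrable_comp (hX.measurable n))).congr (.of_forall fun ω => ?_)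
  simp only [Pi.sub_apply]
  ring

theorem integral_abs_mul_two_mul_tail_sub_le (hX : IsMarkovChain κ P X)
    (hF : HasBoundedPotential κ F R) (n : ℕ) :
    ∫ ω, |F (X n ω) * (2 * ∑' k, F (X (n + k) ω) - F (X n ω))| ∂P
      ≤ 3 * R * ∫ ω, |F (X n ω)| ∂P := by
  have hFb := hF.isBoundedMeasurable
  have htail := (hX.integrable_mul_tsum_comp_add hFb hF n).abs.const_mul 2
  have habs := (hFb.abs.integrable_comp (hX.measurable n)).const_mul R (μ := P)
  have pointwise (ω : Ω) : |F (X n ω) * (2 * ∑' k, F (X (n + k) ω) - F (X n ω))|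
      ≤ 2 * |F (X n ω) * ∑' k, F (X (n + k) ω)| + R * |F (X n ω)| := by
    rw [mul_sub, mul_left_comm]
    refine (abs_sub _ _).trans (add_le_add (by simp [abs_mul]) ?_)
    rw [abs_mul]
    exact mul_le_mul_of_nonneg_right (hF.abs_le _) (abs_nonneg _)
  calc ∫ ω, |F (X n ω) * (2 * ∑' k, F (X (n + k) ω) - F (X n ω))| ∂P
      ≤ ∫ ω, (2 * |F (X n ω) * ∑' k, F (X (n + k) ω)| + R * |F (X n ω)|) ∂P :=
        integral_mono_of_nonneg (.of_forall fun _ => abs_nonneg _) (htail.add habs)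
          (.of_forall pointwise)
    _ = 2 * ∫ ω, |F (X n ω) * ∑' k, F (X (n + k) ω)| ∂P + R * ∫ ω, |F (X n ω)| ∂P := by
        rw [← integral_const_mul, ← integral_const_mul]
        exact integral_add htail habs
    _ ≤ 2 * (R * ∫ ω, |F (X n ω)| ∂P) + R * ∫ ω, |F (X n ω)| ∂P := by
        gcongr
        exact hX.integral_abs_mul_tsum_comp_add_le hFb hF n
    _ = 3 * R * ∫ ω, |F (X n ω)| ∂P := by ring

theorem integral_mul_two_mul_tail_sub (hX : IsMarkovChain κ P X)
    (hF : HasBoundedPotential κ F R) (n : ℕ) :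
    ∫ ω, F (X n ω) * (2 * ∑' k, F (X (n + k) ω) - F (X n ω)) ∂P
      = ∫ ω, Kiter κ n (fun x => 2 * F x * (∑' k, Kiter κ k F x) - F x ^ 2) (X 0 ω) ∂P := by
  have hFb := hF.isBoundedMeasurable
  have htwoF := (IsBoundedMeasurable.const 2).mul hFb
  have hu := htwoF.mul hF.isBoundedMeasurable_tsum_kiter
  have hsq : IsBoundedMeasurable fun x => F x ^ 2 := by simpa only [sq] using hFb.mul hFb
  have hsq_int := hsq.integrable_comp (hX.measurable n) (P := P)
  calc ∫ ω, F (X n ω) * (2 * ∑' k, F (X (n + k) ω) - F (X n ω)) ∂P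
      = ∫ ω, (2 * F (X n ω) * ∑' k, F (X (n + k) ω) - F (X n ω) ^ 2) ∂P := by
        congr! 2
        ring
    _ = ∫ ω, 2 * F (X n ω) * ∑' k, F (X (n + k) ω) ∂P - ∫ ω, F (X n ω) ^ 2 ∂P :=
        integral_sub (hX.integrable_mul_tsum_comp_add htwoF hF n) hsq_int
    _ = ∫ ω, 2 * F (X n ω) * ∑' k, Kiter κ k F (X n ω) ∂P - ∫ ω, F (X n ω) ^ 2 ∂P := by
        rw [hX.integral_mul_tsum_comp_add htwoF hF n]
    _ = ∫ ω, (2 * F (X n ω) * ∑' k, Kiter κ k F (X n ω) - F (X n ω) ^ 2) ∂P :=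
        (integral_sub (hu.integrable_comp (hX.measurable n)) hsq_int).symm
    _ = _ := hX.integral_comp (hu.sub hsq) n

theorem hasSum_integral_kiter_secondMoment (hX : IsMarkovChain κ P X)
    (hF : HasBoundedPotential κ F R) :
    HasSum
      (fun n => ∫ ω, Kiter κ n (fun x => 2 * F x * (∑' k, Kiter κ k F x) - F x ^ 2) (X 0 ω) ∂P)
      (∫ ω, (∑' n, F (X n ω)) ^ 2 ∂P) := by
  have hsum : Summable fun n =>
      ∫ ω, ‖F (X n ω) * (2 * ∑' k, F (X (n + k) ω) - F (X n ω))‖ ∂P :=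
    .of_nonneg_of_le (fun _ => integral_nonneg fun _ => norm_nonneg _)
      (hX.integral_abs_mul_two_mul_tail_sub_le hF)
      ((hX.summable_integral_abs_comp hF).mul_left (3 * R))
  have hasSum_terms := hasSum_integral_of_summable_integral_norm
    (hX.integrable_mul_two_mul_tail_sub hF) hsum
  have square : ∀ᵐ ω ∂P, ∑' n, F (X n ω) * (2 * ∑' k, F (X (n + k) ω) - F (X n ω))
      = (∑' n, F (X n ω)) ^ 2 := by
    filter_upwards [hX.ae_summable_abs_comp hF] with ω hω
    simp only [← Real.norm_eq_abs] at hω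
    exact (hasSum_mul_two_mul_tail_sub hω).tsum_eq
  simpa only [hX.integral_mul_two_mul_tail_sub hF, integral_congr_ae square] using hasSum_terms

end IsMarkovChain

section Killing

/-- The extension of a function on `E` to `E ∪ {∂}` by the value `0` at the cemetery `∂ = none`. -/
def extendZero {E : Type*} (g : E → ℝ) : Option E → ℝ := fun o => o.elim 0 g

theorem abs_extendZero {E : Type*} (g : E → ℝ) : |extendZero g| = extendZero |g| := by
  funext o
  cases o <;> simp [extendZero]

variable {E : Type*} [MeasurableSpace E]

theorem measurableEmbedding_some : MeasurableEmbedding (some : E → Option E) where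
  injective := Option.some_injective E
  measurable := measurable_comap_iff.2 measurable_inl
  measurableSet_image' s hs := by
    refine ⟨Sum.inl '' s, hs.inl_image, ?_⟩
    ext o
    cases o <;> simp

theorem measurable_extendZero {g : E → ℝ} (hg : Measurable g) : Measurable (extendZero g) := by
  have hsum : Measurable (Sum.elim g fun _ : PUnit.{1} => (0 : ℝ)) :=
    hg.sumElim measurable_const
  have hfactor : extendZero g
      = Sum.elim g (fun _ : PUnit.{1} => (0 : ℝ)) ∘ Equiv.optionEquivSumPUnit E := by
    funext o
    cases o <;> rfl
  exact hfactor ▸ hsum.comp (comap_measurable _)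

variable {κ : Kernel E E} {κhat : Kernel (Option E) (Option E)}

theorem comap_some_eq_elim
    (hκhat : ∀ a : E, ∀ A : Set (Option E), MeasurableSet A →
      κhat (some a) A = κ a (some ⁻¹' A) + (1 - κ a Set.univ) * A.indicator 1 none)
    (hκhatCemetery : κhat none = Measure.dirac none) (o : Option E) :
    (κhat o).comap some = o.elim 0 κ := by
  ext A hA
  have hsome := measurableEmbedding_some.measurableSet_image' hA
  rw [measurableEmbedding_some.comap_apply]
  cases o with
  | none => simp [hκhatCemetery, Measure.dirac_apply' _ hsome]
  | some a => simp [hκhat a _ hsome, Set.preimage_image_eq A (Option.some_injective E)]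

theorem kop_extendZero (hcomap : ∀ o, (κhat o).comap some = o.elim 0 κ) (g : E → ℝ) :
    Kop κhat (extendZero g) = extendZero (Kop κ g) := by
  funext o
  have hsupp (z : Option E) (hz : z ∉ Set.range some) : extendZero g z = 0 := by
    cases z with
    | none => rfl
    | some a => exact absurd ⟨a, rfl⟩ hz
  calc ∫ z, extendZero g z ∂(κhat o)
      = ∫ z in Set.range some, extendZero g z ∂(κhat o) :=
        (setIntegral_eq_integral_of_forall_compl_eq_zero hsupp).symm
    _ = ∫ x, g x ∂((κhat o).comap some) := by
        rw [← measurableEmbedding_some.map_comap, measurableEmbedding_some.integral_map]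
        rfl
    _ = extendZero (Kop κ g) o := by
        rw [hcomap]
        cases o with
        | none => exact integral_zero_measure g
        | some a => rfl

theorem kiter_extendZero (hcomap : ∀ o, (κhat o).comap some = o.elim 0 κ) (g : E → ℝ) (n : ℕ) :
    Kiter κhat n (extendZero g) = extendZero (Kiter κ n g) := by
  induction n with
  | zero => rfl
  | succ n ih => exact (congrArg (Kop κhat) ih).trans (kop_extendZero hcomap _)

theorem HasBoundedPotential.extendZero {F : E → ℝ} {R : ℝ} (hF : HasBoundedPotential κ F R)
    (hR : 0 ≤ R) (hcomap : ∀ o, (κhat o).comap some = o.elim 0 κ) :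
    HasBoundedPotential κhat (extendZero F) R := by
  refine ⟨measurable_extendZero hF.measurable, fun N o => ?_⟩
  simp only [abs_extendZero, kiter_extendZero hcomap]
  cases o with
  | none => simpa [_root_.extendZero] using hR
  | some a => exact hF.sum_le N a

theorem kiter_secondMoment_extendZero (hcomap : ∀ o, (κhat o).comap some = o.elim 0 κ)
    (F : E → ℝ) (n : ℕ) :
    Kiter κhat n (fun o => 2 * extendZero F o * (∑' k, Kiter κhat k (extendZero F) o)
        - extendZero F o ^ 2)
      = extendZero (Kiter κ n fun x => 2 * F x * (∑' k, Kiter κ k F x) - F x ^ 2) := by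
  have integrand : (fun o => 2 * extendZero F o * (∑' k, Kiter κhat k (extendZero F) o)
      - extendZero F o ^ 2)
      = extendZero fun x => 2 * F x * (∑' k, Kiter κ k F x) - F x ^ 2 := by
    simp only [kiter_extendZero hcomap]
    funext o
    cases o <;> simp [extendZero]
  rw [integrand, kiter_extendZero hcomap]

end Killing

theorem stmt4_general {E : Type*} [MeasurableSpace E] {κ : Kernel E E} {F : E → ℝ} {R : ℝ}
    (hF : HasBoundedPotential κ F R) {κhat : Kernel (Option E) (Option E)} [IsMarkovKernel κhat]
    (hκhat : ∀ a : E, ∀ A : Set (Option E), MeasurableSet A →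
      κhat (some a) A = κ a (some ⁻¹' A) + (1 - κ a Set.univ) * A.indicator 1 none)
    (hκhatCemetery : κhat none = Measure.dirac none) {x₀ : E}
    {Ω : Type*} [MeasurableSpace Ω] {P : Measure Ω} [IsProbabilityMeasure P]
    {X : ℕ → Ω → Option E} (hX : IsMarkovChain κhat P X) (hX₀ : ∀ ω, X 0 ω = some x₀) :
    Summable (fun j =>
      |Kiter κ j (fun x => 2 * F x * (∑' n, Kiter κ n F x) - F x ^ 2) x₀|) ∧
    ∫ ω, (∑' n, (X n ω).elim 0 F) ^ 2 ∂P
      = ∑' j, Kiter κ j (fun x => 2 * F x * (∑' n, Kiter κ n F x) - F x ^ 2) x₀ := by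
  have hcomap := comap_some_eq_elim hκhat hκhatCemetery
  have start_value (g : E → ℝ) : ∫ ω, extendZero g (X 0 ω) ∂P = g x₀ := by
    simp [hX₀, extendZero]
  have hasSum_moment := hX.hasSum_integral_kiter_secondMoment (hF.extendZero (hF.nonneg x₀) hcomap)
  simp only [kiter_secondMoment_extendZero hcomap, start_value] at hasSum_moment
  exact ⟨hasSum_moment.summable.abs, hasSum_moment.tsum_eq.symm⟩

/-- Under the uniform two-step contraction condition, for every bounded measurable `F` and
every `x₀ ∈ E`, writing `u = Σ_n K^n F` for the Neumann-series solution of `u = Ku + F`,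
the second moment of the score-sum estimator `S = Σ_n F(X_n)` is exactly
`𝔼_{x₀}[S²] = Σ_j K^j (2 F·u − F²)(x₀)`, the right-hand series converging absolutely. -/
theorem stmt4 {E : Type*} [MeasurableSpace E] (κ : Kernel E E)
    (hsub : ∀ x, κ x Set.univ ≤ 1)
    (C₁ : ℝ) (hC₁ : C₁ < 1)
    (hcontract : ∀ x, ∫⁻ y, κ y Set.univ ∂(κ x) ≤ ENNReal.ofReal C₁)
    (F : E → ℝ) (hFmeas : Measurable F) (hFbd : ∃ C, ∀ x, |F x| ≤ C)
    -- the extended Markov kernel `κ̂` on `E ∪ {∂}`, where `∂ = none`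
    (κhat : Kernel (Option E) (Option E)) [IsMarkovKernel κhat]
    (hκhat : ∀ a : E, ∀ A : Set (Option E), MeasurableSet A →
      κhat (some a) A = κ a (some ⁻¹' A) + (1 - κ a Set.univ) * A.indicator 1 none)
    (hκhatCemetery : κhat none = Measure.dirac none)
    (x₀ : E)
    -- the Markov chain `(X_n)` with transition kernel `κ̂`, `X₀ = x₀`, and law `P = ℙ_{x₀}`
    {Ω : Type*} [MeasurableSpace Ω] (P : Measure Ω) [IsProbabilityMeasure P]
    (X : ℕ → Ω → Option E) (hXmeas : ∀ n, Measurable (X n))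
    (hX₀ : ∀ ω, X 0 ω = some x₀)
    (hMarkov : ∀ n : ℕ, ∀ f : (Fin (n + 1) → Option E) → ℝ, Measurable f →
      (∃ Cf, ∀ v, |f v| ≤ Cf) → ∀ g : Option E → ℝ, Measurable g → (∃ Cg, ∀ y, |g y| ≤ Cg) →
      ∫ ω, f (fun i => X i ω) * g (X (n + 1) ω) ∂P
        = ∫ ω, f (fun i => X i ω) * ∫ y, g y ∂(κhat (X n ω)) ∂P) :
    Summable (fun j =>
      |Kiter κ j (fun x => 2 * F x * (∑' n, Kiter κ n F x) - F x ^ 2) x₀|) ∧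
    ∫ ω, (∑' n, (X n ω).elim 0 F) ^ 2 ∂P
      = ∑' j, Kiter κ j (fun x => 2 * F x * (∑' n, Kiter κ n F x) - F x ^ 2) x₀ := by
  obtain ⟨M, hM⟩ := hFbd
  exact stmt4_general
    (hasBoundedPotential_of_twoStep hsub (Real.toNNReal_lt_one.2 hC₁) hcontract hFmeas hM)
    hκhat hκhatCemetery ⟨hXmeas, fun n f g hf hg => hMarkov n f hf.1 hf.2 g hg.1 hg.2⟩ hX₀
end

section
/- Let κ₁, κ₂ > 0, 0 < h₁ ≤ 1, 0 < h₂ ≤ 1, x = (x₁, x₂) ∈ ℝ². Let f⁺ : ℝ² → ℝ be four times continuously differentiable on a neighborhood of the rectangle [x₁, x₁+2h₂] × [x₂−h₂, x₂+h₂] and f⁻ : ℝ² → ℝ four times continuously differentiable on a neighborhood of the rectangle [x₁−2h₁, x₁] × [x₂−h₁, x₂+h₁], with all partial derivatives of order 3 and 4 of f⁺ and f⁻ bounded in absolute value by M on the respective rectangles, with Δ f⁺ = 0 and Δ f⁻ = 0 there (harmonicity), and suppose the continuity and transmission conditions f⁺(x) = f⁻(x) and κ₂ ∂₁ f⁺(x)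 = κ₁ ∂₁ f⁻(x) hold at x. Then |(κ₂ h₁ + κ₁ h₂) f⁺(x) − κ₂ h₁ R_{h₂} f⁺(x) − κ₁ h₂ R_{−h₁} f⁻(x)| ≤ 2 M (κ₂ h₁ h₂³ + κ₁ h₂ h₁³); i.e. the interface replacement step is consistent with local bias of the stated order. -/
/-!
In the Taylor expansions of `f` at `x` along the two diagonals `h(e₁ ± e₂)`, the terms odd in `e₂`
up to order two, mixed second derivatives included, cancel in the average `R_h f(x)`. What is left
of order two is `h² Δf(x) / 2 = 0`, so `R_h f(x) = f(x) + h ∂₁f(x) + O(h³)`. When this is applied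
to `f⁺` with step `h₂` and to `f⁻` with step `-h₁`, the weights `κ₂ h₁` and `κ₁ h₂` turn the
first-order terms into `h₁ h₂ (κ₂ ∂₁f⁺(x) - κ₁ ∂₁f⁻(x))`, which vanishes by the transmission
condition. Along a diagonal the third derivative is a sum of `2³` partial derivatives times `± h³`,
hence the constant `2³ / 3! = 4 / 3`.
-/

open Real

/-- The five-point discrete Laplacian
`Δ^h f(y) = h⁻²(f(y+he₁) + f(y−he₁) + f(y+he₂) + f(y−he₂) − 4 f(y))`. -/
noncomputable def lapFD (h : ℝ) (f : ℝ × ℝ → ℝ) (y : ℝ × ℝ) : ℝ :=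
  (f (y.1 + h, y.2) + f (y.1 - h, y.2) + f (y.1, y.2 + h) + f (y.1, y.2 - h) - 4 * f y) / h ^ 2

/-- The one-sided normal difference
`∇^h f(x) = −(2h)⁻¹ (4 f(x+he₁) − 3 f(x) − f(x+2he₁))`. -/
noncomputable def gradFD (h : ℝ) (f : ℝ × ℝ → ℝ) (x : ℝ × ℝ) : ℝ :=
  -(4 * f (x.1 + h, x.2) - 3 * f x - f (x.1 + 2 * h, x.2)) / (2 * h)

/-- The reflection average `R_h f(x) = (f(x+h(e₁+e₂)) + f(x+h(e₁−e₂)))/2`. -/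
noncomputable def reflFD (h : ℝ) (f : ℝ × ℝ → ℝ) (x : ℝ × ℝ) : ℝ :=
  (f (x.1 + h, x.2 + h) + f (x.1 + h, x.2 - h)) / 2

section Taylor

open scoped Nat

variable {E F : Type*} [NormedAddCommGroup E] [NormedSpace ℝ E]
  [NormedAddCommGroup F] [NormedSpace ℝ F]

theorem norm_map_add_sub_sum_iteratedFDeriv_le [CompleteSpace F] {f : E → F} {x y : E}
    {n : ℕ} {C : ℝ}
    (hf : ∀ p ∈ segment ℝ x (x + y), ContDiffAt ℝ (n + 1) f p)
    (hC : ∀ p ∈ segment ℝ x (x + y), ‖iteratedFDeriv ℝ (n + 1) f p fun _ ↦ y‖ ≤ C) :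
    ‖f (x + y) - ∑ k ∈ Finset.range (n + 1), (k ! : ℝ)⁻¹ • iteratedFDeriv ℝ k f x fun _ ↦ y‖ ≤
      C / (n + 1)! := by
  have mem_segment {t : ℝ} (ht : t ∈ Set.Icc 0 1) : x + t • y ∈ segment ℝ x (x + y) := by
    rw [segment_eq_image']
    exact ⟨t, ht, by simp only [add_sub_cancel_left]⟩
  have integral_weight : ∫ t in (0 : ℝ)..1, (1 - t) ^ n * C = C / (n + 1) := by
    rw [intervalIntegral.integral_mul_const,
      intervalIntegral.integral_comp_sub_left (fun t : ℝ ↦ t ^ n), integral_pow]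
    simp [div_eq_inv_mul]
  have integral_remainder :
      ‖∫ t in (0 : ℝ)..1, (1 - t) ^ n • iteratedFDeriv ℝ (n + 1) f (x + t • y) fun _ ↦ y‖ ≤
        C / (n + 1) := by
    rw [← integral_weight]
    refine intervalIntegral.norm_integral_le_of_norm_le zero_le_one (.of_forall fun t ht ↦ ?_)
      (Continuous.intervalIntegrable (by fun_prop) 0 1)
    have weight_nonneg : 0 ≤ (1 - t) ^ n := pow_nonneg (sub_nonneg.2 ht.2) n
    rw [norm_smul, Real.norm_of_nonneg weight_nonneg]
    gcongr
    exact hC _ (mem_segment ⟨ht.1.le, ht.2⟩)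
  rw [map_add_eq_sum_add_integral_iteratedFDeriv fun t ht ↦ hf _ (mem_segment ht),
    add_sub_cancel_left, norm_smul, norm_inv, RCLike.norm_natCast, Nat.factorial_succ,
    Nat.cast_mul, Nat.cast_succ, ← div_div, inv_mul_eq_div]
  gcongr

theorem iteratedFDeriv_two_add_add_iteratedFDeriv_two_sub (f : E → F) (x u v : E) :
    (iteratedFDeriv ℝ 2 f x fun _ ↦ u + v) + (iteratedFDeriv ℝ 2 f x fun _ ↦ u - v) =
      (2 : ℝ) • (iteratedFDeriv ℝ 2 f x ![u, u] + iteratedFDeriv ℝ 2 f x ![v, v]) := by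
  simp only [iteratedFDeriv_two_apply, Matrix.cons_val_zero, Matrix.cons_val_one, map_add, map_sub,
    add_apply, sub_apply]
  module

theorem iteratedFDeriv_two_smul_smul (f : E → F) (x u : E) (c : ℝ) :
    iteratedFDeriv ℝ 2 f x ![c • u, c • u] = c ^ 2 • iteratedFDeriv ℝ 2 f x ![u, u] := by
  simp only [iteratedFDeriv_two_apply, Matrix.cons_val_zero, Matrix.cons_val_one, map_smul,
    smul_apply]
  module

theorem norm_average_sub_taylor_two_le [CompleteSpace F] {f : E → F} {x u v : E} {C : ℝ}
    (hf : ∀ p ∈ segment ℝ x (x + (u + v)) ∪ segment ℝ x (x + (u - v)), ContDiffAt ℝ 3 f p)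
    (hCadd : ∀ p ∈ segment ℝ x (x + (u + v)), ‖iteratedFDeriv ℝ 3 f p fun _ ↦ u + v‖ ≤ C)
    (hCsub : ∀ p ∈ segment ℝ x (x + (u - v)), ‖iteratedFDeriv ℝ 3 f p fun _ ↦ u - v‖ ≤ C) :
    ‖(2 : ℝ)⁻¹ • (f (x + (u + v)) + f (x + (u - v))) - (f x + fderiv ℝ f x u +
      (2 : ℝ)⁻¹ • (iteratedFDeriv ℝ 2 f x ![u, u] + iteratedFDeriv ℝ 2 f x ![v, v]))‖ ≤
      C / 6 := by
  have taylor {w : E} (hw : ∀ p ∈ segment ℝ x (x + w), ContDiffAt ℝ 3 f p)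
      (hCw : ∀ p ∈ segment ℝ x (x + w), ‖iteratedFDeriv ℝ 3 f p fun _ ↦ w‖ ≤ C) :
      ‖f (x + w) - (f x + fderiv ℝ f x w + (2 : ℝ)⁻¹ • iteratedFDeriv ℝ 2 f x fun _ ↦ w)‖ ≤
        C / 6 := by
    simpa [Finset.sum_range_succ, Nat.factorial] using
      norm_map_add_sub_sum_iteratedFDeriv_le (n := 2)
        (fun p hp ↦ by simpa [two_add_one_eq_three] using hw p hp) hCw
  have midpoint_mem := (convex_closedBall (0 : F) (C / 6)).midpoint_mem
    (mem_closedBall_zero_iff.2 (taylor (fun p hp ↦ hf p (.inl hp)) hCadd))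
    (mem_closedBall_zero_iff.2 (taylor (fun p hp ↦ hf p (.inr hp)) hCsub))
  rw [← mem_closedBall_zero_iff]
  convert midpoint_mem using 1
  rw [midpoint_eq_smul_add, invOf_eq_inv, map_add, map_sub]
  linear_combination (norm := module)
    (4 : ℝ)⁻¹ • iteratedFDeriv_two_add_add_iteratedFDeriv_two_sub f x u v

end Taylor

theorem norm_multilinearMap_sum_smul_le {ι α V F : Type*} [Fintype ι] [Fintype α]
    [AddCommGroup V] [Module ℝ V] [SeminormedAddCommGroup F] [NormedSpace ℝ F]
    (T : MultilinearMap ℝ (fun _ : ι ↦ V) F) (c : ι → α → ℝ) (e : α → V) {M : ℝ}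
    (hT : ∀ r : ι → α, ‖T fun i ↦ e (r i)‖ ≤ M) :
    ‖T fun i ↦ ∑ j, c i j • e j‖ ≤ (∏ i, ∑ j, |c i j|) * M := by
  classical
  calc ‖T fun i ↦ ∑ j, c i j • e j‖
      = ‖∑ r : ι → α, (∏ i, c i (r i)) • T fun i ↦ e (r i)‖ := by
        simp only [T.map_sum, T.map_smul_univ]
    _ ≤ ∑ r : ι → α, (∏ i, |c i (r i)|) * M := by
        refine norm_sum_le_of_le _ fun r _ ↦ ?_
        rw [norm_smul, Real.norm_eq_abs, Finset.abs_prod]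
        gcongr
        exact hT r
    _ = (∏ i, ∑ j, |c i j|) * M := by
        rw [← Finset.sum_mul, Finset.prod_univ_sum, Fintype.piFinset_univ]

theorem norm_multilinearMap_const_prodMk_le {ι F : Type*} [Fintype ι] [SeminormedAddCommGroup F]
    [NormedSpace ℝ F] (T : MultilinearMap ℝ (fun _ : ι ↦ ℝ × ℝ) F) {M : ℝ}
    (hT : ∀ v : ι → ℝ × ℝ, (∀ i, v i = (1, 0) ∨ v i = (0, 1)) → ‖T v‖ ≤ M) (a b : ℝ) :
    ‖T fun _ ↦ (a, b)‖ ≤ (|a| + |b|) ^ Fintype.card ι * M := by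
  have basis_mem (j : Fin 2) : (![(1, 0), (0, 1)] : Fin 2 → ℝ × ℝ) j = (1, 0) ∨
      (![(1, 0), (0, 1)] : Fin 2 → ℝ × ℝ) j = (0, 1) := by
    fin_cases j <;> simp
  simpa [Fin.sum_univ_two] using norm_multilinearMap_sum_smul_le T (fun _ ↦ ![a, b])
    ![(1, 0), (0, 1)] fun r ↦ hT _ fun i ↦ basis_mem (r i)

/-- The two diagonal segments joining `x` to the nodes of the reflection average `R_h f(x)`,
along which `f` is expanded. -/
def reflSegments (h : ℝ) (x : ℝ × ℝ) : Set (ℝ × ℝ) :=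
  segment ℝ x (x.1 + h, x.2 + h) ∪ segment ℝ x (x.1 + h, x.2 - h)

theorem self_mem_reflSegments (h : ℝ) (x : ℝ × ℝ) : x ∈ reflSegments h x :=
  .inl (left_mem_segment ℝ _ _)

theorem reflSegments_subset_of_convex {h : ℝ} {x : ℝ × ℝ} {K : Set (ℝ × ℝ)} (hK : Convex ℝ K)
    (hx : x ∈ K) (hadd : (x.1 + h, x.2 + h) ∈ K) (hsub : (x.1 + h, x.2 - h) ∈ K) :
    reflSegments h x ⊆ K :=
  Set.union_subset (hK.segment_subset hx hadd) (hK.segment_subset hx hsub)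

theorem reflSegments_subset_Icc_prod_right {h : ℝ} (hh : 0 ≤ h) (x : ℝ × ℝ) :
    reflSegments h x ⊆ Set.Icc x.1 (x.1 + 2 * h) ×ˢ Set.Icc (x.2 - h) (x.2 + h) := by
  apply reflSegments_subset_of_convex ((convex_Icc _ _).prod (convex_Icc _ _)) <;>
    simp only [Set.mem_prod, Set.mem_Icc] <;> refine ⟨⟨?_, ?_⟩, ?_, ?_⟩ <;> linarith

theorem reflSegments_neg_subset_Icc_prod_left {h : ℝ} (hh : 0 ≤ h) (x : ℝ × ℝ) :
    reflSegments (-h) x ⊆ Set.Icc (x.1 - 2 * h) x.1 ×ˢ Set.Icc (x.2 - h) (x.2 + h) := by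
  apply reflSegments_subset_of_convex ((convex_Icc _ _).prod (convex_Icc _ _)) <;>
    simp only [Set.mem_prod, Set.mem_Icc] <;> refine ⟨⟨?_, ?_⟩, ?_, ?_⟩ <;> linarith

theorem abs_reflFD_sub_le_of_laplacian_eq_zero {f : ℝ × ℝ → ℝ} {U : Set (ℝ × ℝ)}
    {x : ℝ × ℝ} {h M : ℝ}
    (hU : IsOpen U) (hseg : reflSegments h x ⊆ U) (hf : ContDiffOn ℝ 3 f U)
    (hM : ∀ p ∈ reflSegments h x, ∀ v : Fin 3 → ℝ × ℝ, (∀ i, v i = (1, 0) ∨ v i = (0, 1)) →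
      |iteratedFDerivWithin ℝ 3 f U p v| ≤ M)
    (hharm : iteratedFDerivWithin ℝ 2 f U x ![(1, 0), (1, 0)] +
      iteratedFDerivWithin ℝ 2 f U x ![(0, 1), (0, 1)] = 0) :
    |reflFD h f x - (f x + h * fderivWithin ℝ f U x (1, 0))| ≤ 4 / 3 * M * |h| ^ 3 := by
  have hx := hseg (self_mem_reflSegments h x)
  have node_add : (x.1 + h, x.2 + h) = x + ((h, 0) + (0, h)) := by ext <;> simp
  have node_sub : (x.1 + h, x.2 - h) = x + ((h, 0) - (0, h)) := by
    ext <;> simp [sub_eq_add_neg]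
  have third_deriv_le {p : ℝ × ℝ} (hp : p ∈ reflSegments h x) {b : ℝ} (hb : |b| = |h|) :
      ‖iteratedFDeriv ℝ 3 f p fun _ ↦ (h, b)‖ ≤ 8 * M * |h| ^ 3 := by
    rw [← iteratedFDerivWithin_of_isOpen 3 hU (hseg hp)]
    refine (norm_multilinearMap_const_prodMk_le _ (hM p hp) h b).trans_eq ?_
    rw [hb, Fintype.card_fin]
    ring
  have normal_deriv : fderiv ℝ f x (h, 0) = h * fderivWithin ℝ f U x (1, 0) := by
    rw [fderivWithin_of_isOpen hU hx, ← smul_eq_mul, ← map_smul]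
    simp
  have laplacian_eq_zero : iteratedFDeriv ℝ 2 f x ![(h, 0), (h, 0)] +
      iteratedFDeriv ℝ 2 f x ![(0, h), (0, h)] = 0 := by
    rw [iteratedFDerivWithin_of_isOpen 2 hU hx] at hharm
    have scale_first : ((h, 0) : ℝ × ℝ) = h • (1, 0) := by simp
    have scale_second : ((0, h) : ℝ × ℝ) = h • (0, 1) := by simp
    rw [scale_first, scale_second, iteratedFDeriv_two_smul_smul, iteratedFDeriv_two_smul_smul,
      ← smul_add, hharm, smul_zero]
  have expansion := norm_average_sub_taylor_two_le (f := f) (x := x) (u := (h, 0)) (v := (0, h))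
    (C := 8 * M * |h| ^ 3)
    (by
      rw [← node_add, ← node_sub]
      exact fun p hp ↦ hf.contDiffAt (hU.mem_nhds (hseg hp)))
    (fun p hp ↦ by simpa using third_deriv_le (.inl (node_add ▸ hp)) rfl)
    (fun p hp ↦ by simpa using third_deriv_le (.inr (node_sub ▸ hp)) (abs_neg h))
  rw [laplacian_eq_zero, smul_zero, add_zero, normal_deriv, ← node_add, ← node_sub, smul_eq_mul,
    inv_mul_eq_div] at expansion
  calc |reflFD h f x - (f x + h * fderivWithin ℝ f U x (1, 0))|
      ≤ 8 * M * |h| ^ 3 / 6 := expansion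
    _ = 4 / 3 * M * |h| ^ 3 := by ring

theorem stmt14_general {κ₁ κ₂ h₁ h₂ : ℝ} {x : ℝ × ℝ} {M : ℝ} {fp fm : ℝ × ℝ → ℝ}
    {Up Um : Set (ℝ × ℝ)} (hUp : IsOpen Up) (hUm : IsOpen Um)
    (hsegp : reflSegments h₂ x ⊆ Up) (hsegm : reflSegments (-h₁) x ⊆ Um)
    (hfp : ContDiffOn ℝ 3 fp Up) (hfm : ContDiffOn ℝ 3 fm Um)
    (hMp : ∀ p ∈ reflSegments h₂ x, ∀ v : Fin 3 → ℝ × ℝ, (∀ i, v i = (1, 0) ∨ v i = (0, 1)) →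
      |iteratedFDerivWithin ℝ 3 fp Up p v| ≤ M)
    (hMm : ∀ p ∈ reflSegments (-h₁) x, ∀ v : Fin 3 → ℝ × ℝ, (∀ i, v i = (1, 0) ∨ v i = (0, 1)) →
      |iteratedFDerivWithin ℝ 3 fm Um p v| ≤ M)
    (hharmp : iteratedFDerivWithin ℝ 2 fp Up x ![(1, 0), (1, 0)] +
      iteratedFDerivWithin ℝ 2 fp Up x ![(0, 1), (0, 1)] = 0)
    (hharmm : iteratedFDerivWithin ℝ 2 fm Um x ![(1, 0), (1, 0)] +
      iteratedFDerivWithin ℝ 2 fm Um x ![(0, 1), (0, 1)] = 0)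
    (hcont : fp x = fm x)
    (htrans : κ₂ * fderivWithin ℝ fp Up x (1, 0) = κ₁ * fderivWithin ℝ fm Um x (1, 0)) :
    |(κ₂ * h₁ + κ₁ * h₂) * fp x - κ₂ * h₁ * reflFD h₂ fp x - κ₁ * h₂ * reflFD (-h₁) fm x| ≤
      4 / 3 * M * (|κ₂ * h₁| * |h₂| ^ 3 + |κ₁ * h₂| * |h₁| ^ 3) := by
  set errp := reflFD h₂ fp x - (fp x + h₂ * fderivWithin ℝ fp Up x (1, 0))
  set errm := reflFD (-h₁) fm x - (fm x + -h₁ * fderivWithin ℝ fm Um x (1, 0))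
  have errp_le : |errp| ≤ 4 / 3 * M * |h₂| ^ 3 :=
    abs_reflFD_sub_le_of_laplacian_eq_zero hUp hsegp hfp hMp hharmp
  have errm_le : |errm| ≤ 4 / 3 * M * |h₁| ^ 3 := by
    simpa only [abs_neg] using abs_reflFD_sub_le_of_laplacian_eq_zero hUm hsegm hfm hMm hharmm
  calc |(κ₂ * h₁ + κ₁ * h₂) * fp x - κ₂ * h₁ * reflFD h₂ fp x - κ₁ * h₂ * reflFD (-h₁) fm x|
      = |κ₂ * h₁ * errp + κ₁ * h₂ * errm| := by
        rw [← abs_neg]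
        congr 1
        simp only [errp, errm]
        linear_combination h₁ * h₂ * htrans - κ₁ * h₂ * hcont
    _ ≤ |κ₂ * h₁| * |errp| + |κ₁ * h₂| * |errm| := by
        simpa only [abs_mul] using abs_add_le (κ₂ * h₁ * errp) (κ₁ * h₂ * errm)
    _ ≤ |κ₂ * h₁| * (4 / 3 * M * |h₂| ^ 3) + |κ₁ * h₂| * (4 / 3 * M * |h₁| ^ 3) := by gcongr
    _ = 4 / 3 * M * (|κ₂ * h₁| * |h₂| ^ 3 + |κ₁ * h₂| * |h₁| ^ 3) := by ring

/-- Interface consistency: let `κ₁, κ₂ > 0`, `0 < h₁, h₂ ≤ 1`, `x ∈ ℝ²`, let `f⁺` be `C⁴`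
on a neighborhood of `[x₁, x₁+2h₂] × [x₂−h₂, x₂+h₂]` and `f⁻` be `C⁴` on a neighborhood of
`[x₁−2h₁, x₁] × [x₂−h₁, x₂+h₁]`, with all partials of order 3 and 4 bounded by `M` on the
respective rectangles, both harmonic there, and suppose `f⁺(x) = f⁻(x)` and
`κ₂ ∂₁f⁺(x) = κ₁ ∂₁f⁻(x)`.  Then
`|(κ₂h₁ + κ₁h₂) f⁺(x) − κ₂h₁ R_{h₂} f⁺(x) − κ₁h₂ R_{−h₁} f⁻(x)| ≤ 2M(κ₂h₁h₂³ + κ₁h₂h₁³)`. -/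
theorem stmt14 (κ₁ κ₂ : ℝ) (hκ₁ : 0 < κ₁) (hκ₂ : 0 < κ₂)
    (h₁ h₂ : ℝ) (hh₁0 : 0 < h₁) (hh₁1 : h₁ ≤ 1) (hh₂0 : 0 < h₂) (hh₂1 : h₂ ≤ 1)
    (x : ℝ × ℝ) (M : ℝ) (fp fm : ℝ × ℝ → ℝ)
    (Up Um : Set (ℝ × ℝ)) (hUp : IsOpen Up) (hUm : IsOpen Um)
    (hrectp : Set.Icc x.1 (x.1 + 2 * h₂) ×ˢ Set.Icc (x.2 - h₂) (x.2 + h₂) ⊆ Up)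
    (hrectm : Set.Icc (x.1 - 2 * h₁) x.1 ×ˢ Set.Icc (x.2 - h₁) (x.2 + h₁) ⊆ Um)
    (hfp : ContDiffOn ℝ 4 fp Up) (hfm : ContDiffOn ℝ 4 fm Um)
    (hMp3 : ∀ p ∈ Set.Icc x.1 (x.1 + 2 * h₂) ×ˢ Set.Icc (x.2 - h₂) (x.2 + h₂),
      ∀ v : Fin 3 → ℝ × ℝ,
      (∀ i, v i = ((1 : ℝ), (0 : ℝ)) ∨ v i = ((0 : ℝ), (1 : ℝ))) →
      |iteratedFDerivWithin ℝ 3 fp Up p v| ≤ M)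
    (hMp4 : ∀ p ∈ Set.Icc x.1 (x.1 + 2 * h₂) ×ˢ Set.Icc (x.2 - h₂) (x.2 + h₂),
      ∀ v : Fin 4 → ℝ × ℝ,
      (∀ i, v i = ((1 : ℝ), (0 : ℝ)) ∨ v i = ((0 : ℝ), (1 : ℝ))) →
      |iteratedFDerivWithin ℝ 4 fp Up p v| ≤ M)
    (hMm3 : ∀ p ∈ Set.Icc (x.1 - 2 * h₁) x.1 ×ˢ Set.Icc (x.2 - h₁) (x.2 + h₁),
      ∀ v : Fin 3 → ℝ × ℝ,
      (∀ i, v i = ((1 : ℝ), (0 : ℝ)) ∨ v i = ((0 : ℝ), (1 : ℝ))) →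
      |iteratedFDerivWithin ℝ 3 fm Um p v| ≤ M)
    (hMm4 : ∀ p ∈ Set.Icc (x.1 - 2 * h₁) x.1 ×ˢ Set.Icc (x.2 - h₁) (x.2 + h₁),
      ∀ v : Fin 4 → ℝ × ℝ,
      (∀ i, v i = ((1 : ℝ), (0 : ℝ)) ∨ v i = ((0 : ℝ), (1 : ℝ))) →
      |iteratedFDerivWithin ℝ 4 fm Um p v| ≤ M)
    (hharmp : ∀ p ∈ Set.Icc x.1 (x.1 + 2 * h₂) ×ˢ Set.Icc (x.2 - h₂) (x.2 + h₂),
      iteratedFDerivWithin ℝ 2 fp Up p ![(1, 0), (1, 0)]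
        + iteratedFDerivWithin ℝ 2 fp Up p ![(0, 1), (0, 1)] = 0)
    (hharmm : ∀ p ∈ Set.Icc (x.1 - 2 * h₁) x.1 ×ˢ Set.Icc (x.2 - h₁) (x.2 + h₁),
      iteratedFDerivWithin ℝ 2 fm Um p ![(1, 0), (1, 0)]
        + iteratedFDerivWithin ℝ 2 fm Um p ![(0, 1), (0, 1)] = 0)
    (hcont : fp x = fm x)
    (htrans : κ₂ * fderivWithin ℝ fp Up x (1, 0) = κ₁ * fderivWithin ℝ fm Um x (1, 0)) :
    |(κ₂ * h₁ + κ₁ * h₂) * fp x - κ₂ * h₁ * reflFD h₂ fp x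
        - κ₁ * h₂ * reflFD (-h₁) fm x|
      ≤ 2 * M * (κ₂ * h₁ * h₂ ^ 3 + κ₁ * h₂ * h₁ ^ 3) := by
  have hsegp := reflSegments_subset_Icc_prod_right hh₂0.le x
  have hsegm := reflSegments_neg_subset_Icc_prod_left hh₁0.le x
  have hx := hsegp (self_mem_reflSegments h₂ x)
  have hM : 0 ≤ M := (abs_nonneg _).trans (hMp3 x hx (fun _ ↦ (1, 0)) fun _ ↦ .inl rfl)
  refine (stmt14_general hUp hUm (hsegp.trans hrectp) (hsegm.trans hrectm) (hfp.of_le (by norm_num))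
    (hfm.of_le (by norm_num)) (fun p hp ↦ hMp3 p (hsegp hp)) (fun p hp ↦ hMm3 p (hsegm hp))
    (hharmp x hx) (hharmm x (hsegm (self_mem_reflSegments _ x))) hcont htrans).trans ?_
  rw [abs_of_pos (mul_pos hκ₂ hh₁0), abs_of_pos (mul_pos hκ₁ hh₂0), abs_of_pos hh₁0,
    abs_of_pos hh₂0]
  gcongr
  norm_num
end

section
/- Fix R > 0 and 0 ≤ r < R, set c = (R − r)/(R + r) and f(u) = 2 arctan(c · tan(π u)) for u ∈ (−1/2, 1/2). Then the pushforward under f of the uniform probability measure on the interval (−1/2, 1/2) is absolutely continuous with respect to Lebesgue measure on ℝ, with density α ↦ (R² − r²)/(2π (R² − 2 R r cos α + r²)) on (−π, π) and 0 outside; i.e. if U is uniformly distributed on (−1/2, 1/2), then f(U) is distributed according to the Poisson kernel of the disk of radius R at radius r. -/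
open Real MeasureTheory

/-
With `c = (R - r) / (R + r)` and `t = tan (π u)`, the tangent of half the exit angle is `c t`. In
this coordinate the squared distance from the starting point to the exit point is
`((R - r) ^ 2 + (R + r) ^ 2 (c t) ^ 2) / (1 + (c t) ^ 2)`. For this value of `c` it equals
`(R - r) ^ 2 (1 + t ^ 2) / (1 + (c t) ^ 2)`, which makes the Poisson density the reciprocal of the
Jacobian `2 π c (1 + t ^ 2) / (1 + (c t) ^ 2)` of the change of variables.
-/

lemma map_withDensity_abs_det_fderiv_mul {E : Type*} [NormedAddCommGroup E] [NormedSpace ℝ E]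
    [FiniteDimensional ℝ E] [MeasurableSpace E] [BorelSpace E]
    {s : Set E} {f : E → E} {f' : E → E →L[ℝ] E} (μ : Measure E) [μ.IsAddHaarMeasure]
    (hs : MeasurableSet s) (hf' : ∀ x ∈ s, HasFDerivWithinAt f (f' x) s x) (hf : s.InjOn f)
    (p : E → ENNReal) :
    Measure.map f ((μ.restrict s).withDensity fun x => ENNReal.ofReal |(f' x).det| * p (f x)) =
      (μ.restrict (f '' s)).withDensity p := by
  have hfm : AEMeasurable f (μ.restrict s) :=
    ContinuousOn.aemeasurable (fun x hx => (hf' x hx).continuousWithinAt) hs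
  ext t ht
  have hpre : NullMeasurableSet (f ⁻¹' t) (μ.restrict s) := hfm.nullMeasurableSet_preimage ht
  rw [Measure.map_apply_of_aemeasurable
      (hfm.mono_ac (withDensity_absolutelyContinuous _ _)) ht,
    withDensity_apply₀ _ hpre, withDensity_apply _ ht, ← lintegral_indicator₀ hpre,
    ← lintegral_indicator ht, lintegral_image_eq_lintegral_abs_det_fderiv_mul μ hs hf' hf]
  refine lintegral_congr fun x => ?_
  by_cases hx : f x ∈ t <;> simp [hx]

lemma map_restrict_eq_withDensity_of_abs_deriv_mul_eq_one {s : Set ℝ} {f f' : ℝ → ℝ}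
    {p : ℝ → ENNReal} (hs : MeasurableSet s) (hf' : ∀ x ∈ s, HasDerivWithinAt f (f' x) s x)
    (hf : s.InjOn f) (hp : ∀ x ∈ s, ENNReal.ofReal |f' x| * p (f x) = 1) :
    Measure.map f (volume.restrict s) = (volume.restrict (f '' s)).withDensity p := by
  have hdensity : (fun x => ENNReal.ofReal |f' x| * p (f x)) =ᵐ[volume.restrict s] 1 :=
    (ae_restrict_iff' hs).2 (.of_forall hp)
  rw [← map_withDensity_abs_det_fderiv_mul volume hs
    (fun x hx => (hf' x hx).hasFDerivWithinAt) hf p]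
  simp only [ContinuousLinearMap.det_toSpanSingleton]
  rw [withDensity_congr_ae hdensity, withDensity_one]

lemma withDensity_ofReal_indicator {Ω : Type*} [MeasurableSpace Ω] {μ : Measure Ω} {s : Set Ω}
    (hs : MeasurableSet s) (p : Ω → ℝ) :
    μ.withDensity (fun x => ENNReal.ofReal (s.indicator p x)) =
      (μ.restrict s).withDensity fun x => ENNReal.ofReal (p x) := by
  rw [← withDensity_indicator hs]
  exact congrArg μ.withDensity (Set.indicator_comp_of_zero ENNReal.ofReal_zero).symm

/-- The angle sampled by the uncentered walk on spheres from a uniform `u ∈ (-1/2, 1/2)`; for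
planar Brownian motion started at distance `r` from the center of a disk of radius `R`, take
`c = (R - r) / (R + r)`. -/
noncomputable def exitAngle (c u : ℝ) : ℝ := 2 * arctan (c * tan (π * u))

lemma pi_mul_mem_Ioo {u : ℝ} (hu : u ∈ Set.Ioo (-(1 / 2) : ℝ) (1 / 2)) :
    π * u ∈ Set.Ioo (-(π / 2)) (π / 2) := by
  constructor <;> nlinarith [hu.1, hu.2, pi_pos]

lemma hasDerivAt_exitAngle (c : ℝ) {u : ℝ} (hu : cos (π * u) ≠ 0) :
    HasDerivAt (exitAngle c)
      (2 * π * c * (1 + tan (π * u) ^ 2) / (1 + (c * tan (π * u)) ^ 2)) u := by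
  have htan : HasDerivAt (fun v => tan (π * v)) (1 / cos (π * u) ^ 2 * π) u :=
    (hasDerivAt_tan hu).comp u (hasDerivAt_const_mul π)
  have hsec : 1 / cos (π * u) ^ 2 = 1 + tan (π * u) ^ 2 := by
    rw [← inv_one_add_tan_sq hu, one_div, inv_inv]
  refine ((htan.const_mul c).arctan.const_mul 2).congr_deriv ?_
  rw [hsec]
  ring

lemma bijOn_exitAngle {c : ℝ} (hc : c ≠ 0) :
    Set.BijOn (exitAngle c) (Set.Ioo (-(1 / 2)) (1 / 2)) (Set.Ioo (-π) π) := by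
  refine Set.InvOn.bijOn (f' := fun α => arctan (c⁻¹ * tan (α / 2)) / π)
    ⟨fun u hu => ?_, fun α hα => ?_⟩ (fun u _ => ?_) fun α _ => ?_
  · obtain ⟨hlo, hhi⟩ := pi_mul_mem_Ioo hu
    simp only [exitAngle]
    rw [mul_div_cancel_left₀ _ two_ne_zero, tan_arctan, inv_mul_cancel_left₀ hc,
      arctan_tan hlo hhi, mul_div_cancel_left₀ _ pi_ne_zero]
  · simp only [exitAngle]
    rw [mul_div_cancel₀ _ pi_ne_zero, tan_arctan, mul_inv_cancel_left₀ hc,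
      arctan_tan (by linarith [hα.1]) (by linarith [hα.2]), mul_div_cancel₀ _ two_ne_zero]
  · obtain ⟨hlo, hhi⟩ := arctan_mem_Ioo (c * tan (π * u))
    constructor <;> simp only [exitAngle] <;> linarith
  · obtain ⟨hlo, hhi⟩ := arctan_mem_Ioo (c⁻¹ * tan (α / 2))
    constructor
    · rw [lt_div_iff₀ pi_pos]; linarith
    · rw [div_lt_iff₀ pi_pos]; linarith

lemma poissonKernel_circleMap (R r α : ℝ) :
    poissonKernel 0 r (circleMap 0 R α) =
      (R ^ 2 - r ^ 2) / (R ^ 2 - 2 * R * r * cos α + r ^ 2) := by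
  have hdist : ‖circleMap 0 R α - r‖ ^ 2 = R ^ 2 - 2 * R * r * cos α + r ^ 2 := by
    rw [← Complex.normSq_eq_norm_sq, Complex.normSq_apply]
    simp only [circleMap, zero_add, Complex.sub_re, Complex.mul_re, Complex.ofReal_re,
      Complex.exp_ofReal_mul_I_re, Complex.ofReal_im, Complex.exp_ofReal_mul_I_im, zero_mul,
      sub_zero, Complex.sub_im, Complex.mul_im, add_zero]
    linear_combination R ^ 2 * sin_sq_add_cos_sq α
  simp [poissonKernel_def, hdist]

lemma cos_two_mul_arctan (x : ℝ) : cos (2 * arctan x) = (1 - x ^ 2) / (1 + x ^ 2) := by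
  rw [cos_two_mul, cos_sq_arctan]
  field_simp
  ring

lemma poissonKernel_circleMap_two_mul_arctan (R r x : ℝ) :
    poissonKernel 0 r (circleMap 0 R (2 * arctan x)) =
      (R ^ 2 - r ^ 2) * (1 + x ^ 2) / ((R - r) ^ 2 + (R + r) ^ 2 * x ^ 2) := by
  have hdist : R ^ 2 - 2 * R * r * ((1 - x ^ 2) / (1 + x ^ 2)) + r ^ 2 =
      ((R - r) ^ 2 + (R + r) ^ 2 * x ^ 2) / (1 + x ^ 2) := by
    field_simp
    ring
  rw [poissonKernel_circleMap, cos_two_mul_arctan, hdist, div_div_eq_mul_div]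

lemma poissonKernel_circleMap_exitAngle {R r : ℝ} (hsub : R - r ≠ 0) (hadd : R + r ≠ 0) (u : ℝ) :
    poissonKernel 0 r (circleMap 0 R (exitAngle ((R - r) / (R + r)) u)) =
      (1 + ((R - r) / (R + r) * tan (π * u)) ^ 2) /
        ((R - r) / (R + r) * (1 + tan (π * u) ^ 2)) := by
  rw [exitAngle, poissonKernel_circleMap_two_mul_arctan]
  generalize tan (π * u) = t
  have hdist : (R - r) ^ 2 + (R + r) ^ 2 * ((R - r) / (R + r) * t) ^ 2 =
      (R - r) ^ 2 * (1 + t ^ 2) := by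
    field_simp
  rw [hdist, sq_sub_sq]
  field_simp

theorem map_exitAngle_volume_restrict {R r : ℝ} (hr : |r| < R) :
    Measure.map (exitAngle ((R - r) / (R + r))) (volume.restrict (Set.Ioo (-(1 / 2)) (1 / 2))) =
      (volume.restrict (Set.Ioo (-π) π)).withDensity
        fun α => ENNReal.ofReal (poissonKernel 0 r (circleMap 0 R α) / (2 * π)) := by
  obtain ⟨hlo, hhi⟩ := abs_lt.1 hr
  have hsub : 0 < R - r := sub_pos.2 hhi
  have hadd : 0 < R + r := by linarith
  have hc : 0 < (R - r) / (R + r) := div_pos hsub hadd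
  have hbij := bijOn_exitAngle hc.ne'
  rw [← hbij.image_eq]
  refine map_restrict_eq_withDensity_of_abs_deriv_mul_eq_one measurableSet_Ioo
    (fun u hu => (hasDerivAt_exitAngle _
      (cos_pos_of_mem_Ioo (pi_mul_mem_Ioo hu)).ne').hasDerivWithinAt) hbij.injOn fun u _ => ?_
  rw [poissonKernel_circleMap_exitAngle hsub.ne' hadd.ne', abs_of_nonneg (by positivity),
    ← ENNReal.ofReal_mul (by positivity), ENNReal.ofReal_eq_one]
  field_simp

theorem stmt16_general (R r : ℝ) (hr : |r| < R) :
    Measure.map (fun u : ℝ => 2 * arctan ((R - r) / (R + r) * tan (π * u)))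
        (volume.restrict (Set.Ioo (-(1 / 2) : ℝ) (1 / 2)))
      = volume.withDensity (fun α => ENNReal.ofReal
          (Set.indicator (Set.Ioo (-π) π)
            (fun α => (R ^ 2 - r ^ 2) / (2 * π * (R ^ 2 - 2 * R * r * cos α + r ^ 2))) α)) := by
  rw [withDensity_ofReal_indicator measurableSet_Ioo]
  refine (map_exitAngle_volume_restrict hr).trans ?_
  simp only [poissonKernel_circleMap, div_div, mul_comm (2 * π)]

/-- Fix `R > 0`, `0 ≤ r < R`, set `c = (R−r)/(R+r)` and `f(u) = 2 arctan(c tan(π u))`.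
The pushforward under `f` of the uniform probability measure on `(−1/2, 1/2)` is
absolutely continuous with respect to Lebesgue measure with density
`α ↦ (R² − r²)/(2π (R² − 2Rr cos α + r²))` on `(−π, π)` and `0` outside: if `U` is uniform
on `(−1/2, 1/2)`, then `f(U)` is distributed according to the Poisson kernel of the disk
of radius `R` at radius `r`. -/
theorem stmt16 (R r : ℝ) (hR : 0 < R) (hr : 0 ≤ r) (hrR : r < R) :
    Measure.map (fun u : ℝ => 2 * arctan ((R - r) / (R + r) * tan (π * u)))
        (volume.restrict (Set.Ioo (-(1 / 2) : ℝ) (1 / 2)))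
      = volume.withDensity (fun α => ENNReal.ofReal
          (Set.indicator (Set.Ioo (-π) π)
            (fun α => (R ^ 2 - r ^ 2) / (2 * π * (R ^ 2 - 2 * R * r * cos α + r ^ 2))) α)) :=
  stmt16_general R r (abs_lt.2 ⟨by linarith, hrR⟩)
end
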